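/- For all n ≥ 3, the number of permutations of [n] containing exactly one occurrence of the pattern 123 equals (3/n)·C(2n, n-3) = 6·(2n-1)!/((n+3)!·(n-3)!). -/

import Mathlib

/-!
The count goes by building a permutation one final entry at a time.

For a permutation `π` of `Fin n` let `occ π` be the number of occurrences of 123, and for a
threshold `t` let `pairs π t` be the number of non-inversions of `π` with both values below `t`.
Appending a last entry of value `v` (and shifting the values `≥ v` up) is a bijection
`Perm (Fin n) × Fin (n + 1) ≃ Perm (Fin (n + 1))`. It adds `pairs π v` to `occ π`
(`occ_append`), and it changes the function `pairs π` by the rule `step` (`pairs_append`). The pair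
(`pairs π`, `occ π`) therefore evolves autonomously, and the number of ways to end with exactly one
occurrence is the recursively defined `completions` (`sum_completions`).

As long as `occ π ≤ 1`, only two numbers matter: `p`, the largest threshold `≤ n` with
`pairs π p = 0`, and `q`, the number of thresholds `t ≤ n` with `pairs π t = 1`.
* If `occ π = 1`, the next value `v` must be `≤ p`; it leads to `p + 1` if `v = 0` and to `v`
  otherwise. This is the Catalan generating tree, so the number of completions is a ballot number
  (`completions_one`).
* If `occ π = 0`, then `v = 0` leads to `(p + 1, q)`, `v = 1` to `(1, p)`, `2 ≤ v ≤ p` to `(v, 0)`,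
  and each of the `q` values `p < v ≤ p + q` creates the single occurrence and keeps `p`
  (`completions_zero`); larger values create too many occurrences.

With `C` the Catalan series and `ballot r k = [x ^ k] C ^ r`, the solution of the second recursion
has generating function `x (1 - x) C ^ (p + 4) - x C ^ 3 + q x C ^ (p + 2)`. At `p = q = 0`, the
empty permutation, this equals `x ^ 3 C ^ 6`, so the answer is `ballot 6 (n - 3)`.
-/

/-- The number of occurrences of the pattern `τ` (a permutation of `Fin k`) in the
permutation `π` of `Fin n`. -/
noncomputable def numOcc {k n : ℕ} (τ : Equiv.Perm (Fin k)) (π : Equiv.Perm (Fin n)) : ℕ :=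
  Nat.card {f : Fin k → Fin n // StrictMono f ∧ ∀ a b : Fin k, π (f a) < π (f b) ↔ τ a < τ b}

/-! ### Ballot numbers -/

/-- The ballot number `[x ^ k] C(x) ^ r`, where `C = 1 + x C ^ 2` is the Catalan generating
function; the recursion is `C ^ (r + 1) = C ^ r + x C ^ (r + 2)`. -/
def ballot : ℕ → ℕ → ℕ
  | _, 0 => 1
  | 0, _ + 1 => 0
  | r + 1, k + 1 => ballot r (k + 1) + ballot (r + 2) k
termination_by r k => (k, r)

lemma ballot_zero_right (r : ℕ) : ballot r 0 = 1 := by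
  cases r <;> simp [ballot]

lemma ballot_zero_succ (k : ℕ) : ballot 0 (k + 1) = 0 := by
  simp [ballot]

lemma ballot_succ_succ (r k : ℕ) :
    ballot (r + 1) (k + 1) = ballot r (k + 1) + ballot (r + 2) k := by
  rw [ballot]

lemma ballot_succ_eq_sum (r k : ℕ) :
    ballot r (k + 1) = ∑ j ∈ Finset.range r, ballot (j + 2) k := by
  induction r with
  | zero => simp [ballot_zero_succ]
  | succ r ih => rw [ballot_succ_succ, ih, Finset.sum_range_succ]

lemma ballot_mul_factorial (k : ℕ) : ∀ r : ℕ,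
    ballot (r + 1) k * (k.factorial * (k + r + 1).factorial) =
      (r + 1) * (2 * k + r).factorial := by
  induction k with
  | zero =>
    intro r
    simp [ballot_zero_right, Nat.factorial_succ]
  | succ k ih =>
    -- This form also makes sense for exponent `0`, where the induction on the exponent starts.
    have key : ∀ r : ℕ, ballot r (k + 1) * ((k + 1).factorial * (k + 1 + r).factorial) =
        r * (2 * k + 1 + r).factorial := by
      intro r
      induction r with
      | zero => simp [ballot_zero_succ]
      | succ r ihr =>
        have h := ih (r + 1)
        have e1 : k + 1 + (r + 1) = (k + 1 + r) + 1 := by ring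
        have e2 : k + (r + 1) + 1 = (k + 1 + r) + 1 := by ring
        have e3 : 2 * k + (r + 1) = 2 * k + 1 + r := by ring
        have e4 : 2 * k + 1 + (r + 1) = (2 * k + 1 + r) + 1 := by ring
        rw [e2, e3] at h
        rw [ballot_succ_succ, e1, e4]
        rw [Nat.factorial_succ (2 * k + 1 + r)]
        rw [Nat.factorial_succ (k + 1 + r), Nat.factorial_succ k] at *
        linear_combination (k + 1 + r + 1) * ihr + (k + 1) * h
    intro r
    have h := key (r + 1)
    have e1 : 2 * (k + 1) + r = 2 * k + 1 + (r + 1) := by ring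
    rw [e1]
    exact h

/-! ### The abstract generating tree -/

/-- The effect on the threshold function `pairs π` of appending a last entry of value `v`. -/
def step (N : ℕ → ℕ) (v : ℕ) : ℕ → ℕ :=
  fun t => if t ≤ v then N t else N (t - 1) + v

/-- The number of ways to append `m` further entries to a permutation of length `n` with threshold
function `N` and `T` occurrences of 123 so that the result has exactly one occurrence. -/
def completions : ℕ → (ℕ → ℕ) → ℕ → ℕ → ℤ
  | 0, _, T, _ => if T = 1 then 1 else 0
  | m + 1, N, T, n => ∑ v ∈ Finset.range (n + 1), completions m (step N v) (T + N v) (n + 1)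

lemma completions_of_two_le (m : ℕ) : ∀ (N : ℕ → ℕ) (T n : ℕ), 2 ≤ T →
    completions m N T n = 0 := by
  induction m with
  | zero =>
    intro N T n hT
    simp only [completions]
    rw [if_neg (by omega)]
  | succ m ih =>
    intro N T n hT
    simp only [completions]
    exact Finset.sum_eq_zero fun v _ => ih _ _ _ (by omega)

/-- The number of completions of a permutation with exactly one occurrence, where `p` is the largest
threshold with no non-inversion below it. The values `0` and `j ≤ p` lead to `p + 1` and `j`, so the
recursion is `C ^ (p + 1) = 1 + ∑ j ∈ {1, …, p + 1}, x C ^ (j + 1)`. -/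
lemma completions_one (m : ℕ) : ∀ (N : ℕ → ℕ) (n p : ℕ), p ≤ n → (∀ t ≤ p, N t = 0) →
    (∀ t, p < t → t ≤ n → 1 ≤ N t) → completions m N 1 n = ballot (p + 1) m := by
  induction m with
  | zero =>
    intro N n p _ _ _
    simp [completions, ballot_zero_right]
  | succ m ih =>
    intro N n p hp h0 h1
    obtain ⟨r, rfl⟩ := Nat.exists_eq_add_of_le hp
    simp only [completions]
    have hbig : ∑ x ∈ Finset.range r,
        completions m (step N (p + 1 + x)) (1 + N (p + 1 + x)) (p + 1 + r) = 0 := by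
      refine Finset.sum_eq_zero fun x hx => completions_of_two_le _ _ _ _ ?_
      rw [Finset.mem_range] at hx
      have := h1 (p + 1 + x) (by omega) (by omega)
      omega
    rw [show p + r + 1 = (p + 1) + r by ring, Finset.sum_range_add, hbig, add_zero]
    rw [Finset.sum_range_succ', ballot_succ_eq_sum, Finset.sum_range_succ]
    push_cast
    congr 1
    · refine Finset.sum_congr rfl fun j hj => ?_
      rw [Finset.mem_range] at hj
      rw [h0 (j + 1) (by omega)]
      refine ih _ _ (j + 1) (by omega) ?_ ?_
      · intro t ht
        simp only [step]
        rw [if_pos ht, h0 t (by omega)]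
      · intro t ht _
        simp only [step]
        rw [if_neg (by omega)]
        omega
    · rw [h0 0 (by omega)]
      refine ih _ _ (p + 1) (by omega) ?_ ?_
      · intro t ht
        simp only [step]
        split_ifs
        · exact h0 t (by omega)
        · simpa using h0 (t - 1) (by omega)
      · intro t ht ht'
        simp only [step]
        rw [if_neg (by omega)]
        have := h1 (t - 1) (by omega) (by omega)
        omega

/-- The coefficient of `x ^ m` in `x C ^ (p + 2)`: the contribution to the number of completions of
each threshold with exactly one non-inversion below it. -/
def slopeCoeff : ℕ → ℕ → ℤ
  | 0, _ => 0
  | m + 1, p => ballot (p + 2) m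

/-- The coefficient of `x ^ m` in `x (1 - x) C ^ (p + 4) - x C ^ 3`: the number of completions in
the absence of thresholds with exactly one non-inversion below them. -/
def baseCoeff : ℕ → ℕ → ℤ
  | 0, _ => 0
  | 1, _ => 0
  | m + 2, p => ballot (p + 4) (m + 1) - ballot (p + 4) m - ballot 3 (m + 1)

lemma slopeCoeff_succ (m p : ℕ) : slopeCoeff (m + 1) p = slopeCoeff m (p + 1) + ballot (p + 1) m := by
  cases m with
  | zero => simp [slopeCoeff, ballot_zero_right]
  | succ m =>
    simp only [slopeCoeff]
    rw [ballot_succ_succ (p + 1) m]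
    push_cast
    ring

lemma baseCoeff_succ_zero (m : ℕ) : baseCoeff (m + 1) 0 = baseCoeff m 1 := by
  match m with
  | 0 => simp [baseCoeff]
  | 1 => simp [baseCoeff, ballot_succ_succ, ballot_zero_succ, ballot_zero_right]
  | m + 2 =>
    simp only [baseCoeff]
    rw [ballot_succ_succ 3 (m + 1), ballot_succ_succ 3 m]
    push_cast
    ring

lemma baseCoeff_succ_succ (m p : ℕ) :
    baseCoeff (m + 1) (p + 1) = baseCoeff (m + 1) p + baseCoeff m (p + 2) + slopeCoeff m 1 := by
  match m with
  | 0 => simp [baseCoeff, slopeCoeff]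
  | 1 =>
    simp only [baseCoeff, slopeCoeff, zero_add]
    rw [ballot_succ_succ (p + 4) 0]
    simp [ballot_zero_right]
    ring
  | m + 2 =>
    simp only [baseCoeff, slopeCoeff]
    rw [show p + 1 + 4 = (p + 4) + 1 by ring, ballot_succ_succ (p + 4) (m + 1),
      ballot_succ_succ (p + 4) m]
    push_cast
    ring_nf

lemma baseCoeff_succ (m p : ℕ) :
    baseCoeff (m + 1) p = baseCoeff m (p + 1) + ∑ j ∈ Finset.range p, baseCoeff m (j + 1) + p * slopeCoeff m 1 := by
  suffices h : baseCoeff (m + 1) p = ∑ j ∈ Finset.range (p + 1), baseCoeff m (j + 1) + p * slopeCoeff m 1 by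
    rw [h, Finset.sum_range_succ]; ring
  induction p with
  | zero => simp [baseCoeff_succ_zero]
  | succ p ih =>
    rw [baseCoeff_succ_succ, ih, Finset.sum_range_succ _ (p + 1)]
    push_cast
    ring

/-- The number of completions of a 123-avoiding permutation, where `p` is the largest threshold
with no non-inversion below it and `q` is the number of thresholds with exactly one. -/
lemma completions_zero (m : ℕ) : ∀ (N : ℕ → ℕ) (n p q : ℕ), p + q ≤ n → (q = 0 ∨ 1 ≤ p) →
    (∀ t ≤ p, N t = 0) → (∀ t, p < t → t ≤ p + q → N t = 1) →
    (∀ t, p + q < t → t ≤ n → 2 ≤ N t) →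
    completions m N 0 n = baseCoeff m p + q * slopeCoeff m p := by
  induction m with
  | zero =>
    intro N n p q _ _ _ _ _
    simp [completions, baseCoeff, slopeCoeff]
  | succ m ih =>
    intro N n p q hn hpq h0 h1 h2
    obtain ⟨r, rfl⟩ := Nat.exists_eq_add_of_le hn
    simp only [completions, zero_add]
    rw [show p + q + r + 1 = (p + 1) + q + r by ring, Finset.sum_range_add,
      Finset.sum_range_add, Finset.sum_range_succ']
    have hbig : ∑ x ∈ Finset.range r,
        completions m (step N (p + 1 + q + x)) (N (p + 1 + q + x)) (p + 1 + q + r) = 0 := by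
      refine Finset.sum_eq_zero fun x hx => completions_of_two_le _ _ _ _ ?_
      rw [Finset.mem_range] at hx
      exact h2 _ (by omega) (by omega)
    have hmid : ∑ x ∈ Finset.range q,
        completions m (step N (p + 1 + x)) (N (p + 1 + x)) (p + 1 + q + r) =
          q * ballot (p + 1) m := by
      rw [Finset.sum_congr rfl (g := fun _ => (ballot (p + 1) m : ℤ))]
      · simp
      · intro x hx
        rw [Finset.mem_range] at hx
        rw [h1 _ (by omega) (by omega)]
        refine completions_one _ _ _ p (by omega) ?_ ?_
        · intro t ht
          simp only [step]
          rw [if_pos (by omega), h0 t ht]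
        · intro t ht ht'
          simp only [step]
          split_ifs
          · rw [h1 t (by omega) (by omega)]
          · omega
    have hzero : completions m (step N 0) (N 0) (p + 1 + q + r) =
        baseCoeff m (p + 1) + q * slopeCoeff m (p + 1) := by
      rw [h0 0 (by omega)]
      refine ih _ _ (p + 1) q (by omega) (by omega) ?_ ?_ ?_
      · intro t ht
        simp only [step]
        split_ifs
        · exact h0 t (by omega)
        · simpa using h0 (t - 1) (by omega)
      · intro t ht ht'
        simp only [step]
        rw [if_neg (by omega), h1 (t - 1) (by omega) (by omega)]
      · intro t ht ht'
        simp only [step]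
        rw [if_neg (by omega)]
        exact h2 (t - 1) (by omega) (by omega)
    have hsmall : ∑ j ∈ Finset.range p,
        completions m (step N (j + 1)) (N (j + 1)) (p + 1 + q + r) =
          ∑ j ∈ Finset.range p, baseCoeff m (j + 1) + p * slopeCoeff m 1 := by
      rw [Finset.sum_congr rfl (g := fun j : ℕ =>
        baseCoeff m (j + 1) + (if j = 0 then (p : ℤ) * slopeCoeff m 1 else 0))]
      · rw [Finset.sum_add_distrib, Finset.sum_ite_eq']
        split_ifs with hp
        · rfl
        · have : p = 0 := by simpa using hp
          simp [this]
      · intro j hj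
        rw [Finset.mem_range] at hj
        rw [h0 (j + 1) (by omega)]
        split_ifs with hj0
        · subst hj0
          refine ih _ _ 1 p (by omega) (by omega) ?_ ?_ ?_
          · intro t ht
            simp only [step]
            rw [if_pos (by omega), h0 t (by omega)]
          · intro t ht ht'
            simp only [step]
            rw [if_neg (by omega), h0 (t - 1) (by omega)]
          · intro t ht ht'
            simp only [step]
            rw [if_neg (by omega)]
            by_cases hq : t - 1 ≤ p + q
            · rw [h1 (t - 1) (by omega) hq]
            · have := h2 (t - 1) (by omega) (by omega)
              omega
        · rw [ih _ _ (j + 1) 0 (by omega) (by omega)]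
          · simp
          · intro t ht
            simp only [step]
            rw [if_pos (by omega), h0 t (by omega)]
          · intro t ht ht'
            omega
          · intro t ht ht'
            simp only [step]
            rw [if_neg (by omega)]
            omega
    rw [hbig, hmid, hzero, hsmall, baseCoeff_succ, slopeCoeff_succ]
    ring

/-! ### Appending a last entry to a permutation -/

/-- The number of non-inversions of `π` whose two values are both below `t`. -/
def pairs {n : ℕ} (π : Equiv.Perm (Fin n)) (t : ℕ) : ℕ :=
  ∑ i, ∑ j, if i < j ∧ π i < π j ∧ (π j : ℕ) < t then 1 else 0

/-- The number of occurrences of 123 in `π`, as a sum over triples of positions. -/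
def occ {n : ℕ} (π : Equiv.Perm (Fin n)) : ℕ :=
  ∑ i, ∑ j, ∑ k, if i < j ∧ j < k ∧ π i < π j ∧ π j < π k then 1 else 0

/-- Append a last entry of value `v` to `π`, shifting the values `≥ v` up by one. -/
def append {n : ℕ} (π : Equiv.Perm (Fin n)) (v : Fin (n + 1)) : Equiv.Perm (Fin (n + 1)) :=
  finSuccEquivLast.trans ((Equiv.optionCongr π).trans (finSuccEquiv' v).symm)

lemma append_last {n : ℕ} (π : Equiv.Perm (Fin n)) (v : Fin (n + 1)) :
    append π v (Fin.last n) = v := by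
  simp [append]

lemma append_castSucc {n : ℕ} (π : Equiv.Perm (Fin n)) (v : Fin (n + 1)) (i : Fin n) :
    append π v i.castSucc = v.succAbove (π i) := by
  simp [append]

lemma append_bijective (n : ℕ) :
    Function.Bijective (fun x : Equiv.Perm (Fin n) × Fin (n + 1) => append x.1 x.2) := by
  rw [Fintype.bijective_iff_injective_and_card]
  constructor
  · rintro ⟨π, v⟩ ⟨σ, w⟩ h
    simp only at h
    have hv : v = w := by rw [← append_last π v, h, append_last]
    subst hv
    have : π = σ := by
      ext i
      have hi := congrArg (fun τ => τ i.castSucc) h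
      simp only [append_castSucc] at hi
      rw [Fin.succAbove_right_injective hi]
    rw [this]
  · simp [Fintype.card_perm, Nat.factorial_succ, mul_comm]

lemma sum_perm_succ {n : ℕ} (f : Equiv.Perm (Fin (n + 1)) → ℤ) :
    ∑ π, f π = ∑ π : Equiv.Perm (Fin n), ∑ v : Fin (n + 1), f (append π v) := by
  rw [← Fintype.sum_prod_type']
  exact ((append_bijective n).sum_comp f).symm

lemma sum_val_lt {n : ℕ} (π : Equiv.Perm (Fin n)) (v : ℕ) (hv : v ≤ n) :
    ∑ i, (if (π i : ℕ) < v then 1 else 0) = v := by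
  rw [Equiv.sum_comp π (fun x : Fin n => if (x : ℕ) < v then 1 else 0),
    Fin.sum_univ_eq_sum_range (fun x => if x < v then 1 else 0) n, ← Finset.card_filter]
  have : (Finset.range n).filter (· < v) = Finset.range v := by
    ext x; simp; omega
  rw [this, Finset.card_range]

lemma succAbove_lt_self_iff {n : ℕ} (v : Fin (n + 1)) (x : Fin n) :
    v.succAbove x < v ↔ (x : ℕ) < v := by
  rw [Fin.succAbove_lt_iff_castSucc_lt, Fin.lt_def, Fin.val_castSucc]

lemma val_succAbove_lt_iff {n : ℕ} (v : Fin (n + 1)) (x : Fin n) (t : ℕ) :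
    (v.succAbove x : ℕ) < t ↔ (x : ℕ) < if t ≤ v then t else t - 1 := by
  rcases lt_or_ge (x.castSucc) v with h | h
  · rw [Fin.succAbove_of_castSucc_lt _ _ h]
    rw [Fin.lt_def] at h
    simp only [Fin.val_castSucc] at *
    split_ifs <;> omega
  · rw [Fin.succAbove_of_le_castSucc _ _ h]
    rw [Fin.le_def] at h
    simp only [Fin.val_castSucc, Fin.val_succ] at *
    split_ifs <;> omega

lemma pairs_append {n : ℕ} (π : Equiv.Perm (Fin n)) (v : Fin (n + 1)) :
    pairs (append π v) = step (pairs π) v := by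
  funext t
  have hlast : ∀ i : Fin n, ¬ Fin.last n < i.castSucc := fun i => by
    simp [Fin.lt_def, i.2.le]
  simp only [pairs, Fin.sum_univ_castSucc, append_last, append_castSucc, step,
    Fin.castSucc_lt_castSucc_iff, Fin.succAbove_lt_succAbove_iff, hlast, false_and, if_false,
    lt_irrefl, Finset.sum_const_zero, add_zero, Finset.sum_add_distrib, Fin.castSucc_lt_last,
    true_and, succAbove_lt_self_iff, val_succAbove_lt_iff]
  by_cases h : t ≤ v
  · simp [h, not_lt.mpr h]
  · simp only [h, if_false, not_le.mp h, and_true]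
    rw [sum_val_lt π v (by omega)]

lemma occ_append {n : ℕ} (π : Equiv.Perm (Fin n)) (v : Fin (n + 1)) :
    occ (append π v) = occ π + pairs π v := by
  have hlast : ∀ i : Fin n, ¬ Fin.last n < i.castSucc := fun i => by
    simp [Fin.lt_def, i.2.le]
  simp only [occ, pairs, Fin.sum_univ_castSucc, append_last, append_castSucc,
    Fin.castSucc_lt_castSucc_iff, Fin.succAbove_lt_succAbove_iff, hlast, false_and, and_false,
    if_false, lt_irrefl, Finset.sum_const_zero, add_zero, Finset.sum_add_distrib,
    Fin.castSucc_lt_last, true_and, succAbove_lt_self_iff]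

/-- Grouping the permutations of `Fin k` by the pattern of their first `n` entries: the total number
of completions does not depend on the length `n` from which one completes. -/
lemma sum_completions (m : ℕ) : ∀ n k : ℕ, n + m = k →
    ∑ π : Equiv.Perm (Fin n), completions m (pairs π) (occ π) n =
      ∑ π : Equiv.Perm (Fin k), if occ π = 1 then 1 else 0 := by
  induction m with
  | zero =>
    rintro n k rfl
    simp [completions]
  | succ m ih =>
    intro n k h
    rw [← ih (n + 1) k (by omega), sum_perm_succ]
    refine Finset.sum_congr rfl fun π _ => ?_
    simp only [completions, pairs_append, occ_append]
    rw [Fin.sum_univ_eq_sum_range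
      (fun v => completions m (step (pairs π) v) (occ π + pairs π v) (n + 1)) (n + 1)]

lemma numOcc_eq_occ {n : ℕ} (π : Equiv.Perm (Fin n)) :
    numOcc (Equiv.refl (Fin 3)) π = occ π := by
  let P : Fin n × Fin n × Fin n → Prop := fun x =>
    x.1 < x.2.1 ∧ x.2.1 < x.2.2 ∧ π x.1 < π x.2.1 ∧ π x.2.1 < π x.2.2
  have hocc : occ π = Fintype.card {x // P x} := by
    rw [Fintype.card_subtype, Finset.card_filter]
    simp only [Fintype.sum_prod_type, occ, P]
  rw [hocc, ← Nat.card_eq_fintype_card, numOcc]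
  refine Nat.card_congr
    { toFun := fun f => ⟨(f.1 0, f.1 1, f.1 2), ?_⟩
      invFun := fun x => ⟨![x.1.1, x.1.2.1, x.1.2.2], ?_⟩
      left_inv := ?_
      right_inv := ?_ }
  · obtain ⟨f, hf, h⟩ := f
    exact ⟨hf (by decide), hf (by decide), (h 0 1).2 (by decide), (h 1 2).2 (by decide)⟩
  · obtain ⟨⟨i, j, k⟩, h1, h2, h3, h4⟩ := x
    simp only at h1 h2 h3 h4
    -- An increasing triple satisfies the `↔` because a strictly monotone map reflects `<`.
    have hmono : ∀ {a b c : Fin n}, a < b → b < c → StrictMono ![a, b, c] := by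
      intro a b c hab hbc
      rw [Fin.strictMono_iff_lt_succ]
      intro s
      fin_cases s
      · exact hab
      · exact hbc
    refine ⟨hmono h1 h2, fun a b => ?_⟩
    have hπ : ∀ a : Fin 3, π (![i, j, k] a) = ![π i, π j, π k] a := by
      intro a; fin_cases a <;> rfl
    rw [hπ, hπ]
    exact (hmono h3 h4).lt_iff_lt
  · rintro ⟨f, hf⟩
    apply Subtype.ext
    funext a
    fin_cases a <;> rfl
  · rintro ⟨⟨i, j, k⟩, h⟩
    rfl

lemma card_eq_ballot (k : ℕ) :
    Nat.card {π : Equiv.Perm (Fin (k + 3)) // numOcc (Equiv.refl (Fin 3)) π = 1} =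
      ballot 6 k := by
  have h := sum_completions (k + 3) 0 (k + 3) (by omega)
  rw [Fintype.sum_unique,
    show occ (default : Equiv.Perm (Fin 0)) = 0 by simp [occ],
    completions_zero (k + 3) _ 0 0 0 le_rfl (Or.inl rfl) (fun t _ => by simp [pairs])
      (by omega) (by omega)] at h
  have hb : baseCoeff (k + 3) 0 = ballot 6 k := by
    simp only [baseCoeff, zero_add]
    rw [ballot_succ_succ 3 (k + 1), ballot_succ_succ 4 k]
    push_cast
    ring
  rw [hb] at h
  simp only [numOcc_eq_occ]
  rw [Nat.card_eq_fintype_card, Fintype.card_subtype, Finset.card_filter]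
  apply Nat.cast_injective (R := ℤ)
  push_cast
  simpa using h.symm

theorem count_one_occ_123 (n : ℕ) (hn : 3 ≤ n) :
    (Nat.card {π : Equiv.Perm (Fin n) // numOcc (Equiv.refl (Fin 3)) π = 1} : ℚ) =
      (3 / (n : ℚ)) * (Nat.choose (2 * n) (n - 3) : ℚ) ∧
    (Nat.card {π : Equiv.Perm (Fin n) // numOcc (Equiv.refl (Fin 3)) π = 1} : ℚ) =
      6 * (Nat.factorial (2 * n - 1) : ℚ) /
        ((Nat.factorial (n + 3) : ℚ) * (Nat.factorial (n - 3) : ℚ)) := by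
  obtain ⟨k, rfl⟩ := Nat.exists_eq_add_of_le' hn
  rw [card_eq_ballot, Nat.add_sub_cancel]
  have hk : ((k.factorial : ℕ) : ℚ) ≠ 0 := by exact_mod_cast k.factorial_ne_zero
  have hk6 : (((k + 6).factorial : ℕ) : ℚ) ≠ 0 := by exact_mod_cast (k + 6).factorial_ne_zero
  have h : (ballot 6 k : ℚ) * (k.factorial * (k + 6).factorial) =
      6 * (2 * k + 5).factorial := by
    have := ballot_mul_factorial k 5
    exact_mod_cast this
  have hB : (ballot 6 k : ℚ) =
      6 * (2 * k + 5).factorial / ((k + 6).factorial * k.factorial) := by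
    rw [eq_div_iff (mul_ne_zero hk6 hk)]
    linear_combination h
  refine ⟨?_, ?_⟩
  · rw [hB, Nat.cast_choose ℚ (by omega : k ≤ 2 * (k + 3)),
      show 2 * (k + 3) - k = k + 6 by omega, show 2 * (k + 3) = (2 * k + 5) + 1 by ring,
      Nat.factorial_succ (2 * k + 5)]
    push_cast
    have : (k : ℚ) + 3 ≠ 0 := by positivity
    field_simp
    ring
  · rw [hB, show 2 * (k + 3) - 1 = 2 * k + 5 by omega]
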